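/- Let Γ be a discrete group. Suppose there exist ε > 0 and a net (f_i)_{i∈I} of finitely supported positive-definite functions on Γ with f_i(e) = 1, such that for every g ∈ Γ there is i₀ ∈ I with: for all i ≥ i₀, the number f_i(g) is real and f_i(g) ≥ ε. Then Γ is amenable, i.e., there exists a left-invariant mean on ℓ∞(Γ): a linear functional m : ℓ∞(Γ, ℝ) → ℝ with m(f) ≥ 0 whenever f ≥ 0, m(1) = 1, and m(f(g⁻¹ ·)) = m(f) for every g ∈ Γ and f ∈ ℓ∞(Γ, ℝ). -/

import Mathlib

open scoped ComplexOrder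

/-- A function `f : Γ → ℂ` on a group is positive-definite if all the matrices
`[f(g_k⁻¹ g_j)]` are positive semi-definite. -/
def IsPosDefFn {Γ : Type} [Group Γ] (f : Γ → ℂ) : Prop :=
  ∀ (n : ℕ) (g : Fin n → Γ) (c : Fin n → ℂ),
    0 ≤ ∑ j, ∑ k, c j * (starRingEnd ℂ) (c k) * f ((g k)⁻¹ * g j)


/-- mean from almost invariant densities -/
theorem mean_of_weights {Γ : Type} [Group Γ] [TopologicalSpace Γ] [DiscreteTopology Γ]
    (h : ∀ (S : Finset Γ) (δ : ℝ), 0 < δ → ∃ w : Γ → ℝ, (∀ t, 0 ≤ w t) ∧ Summable w ∧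
      ∑' t, w t = 1 ∧ ∀ s ∈ S, ∑' t, |w (s * t) - w t| ≤ δ) :
    ∃ m : BoundedContinuousFunction Γ ℝ →ₗ[ℝ] ℝ,
      (∀ φ : BoundedContinuousFunction Γ ℝ, (∀ t, 0 ≤ φ t) → 0 ≤ m φ) ∧
      m 1 = 1 ∧
      ∀ (g : Γ) (φ : BoundedContinuousFunction Γ ℝ),
        m (φ.compContinuous ⟨fun t => g⁻¹ * t, continuous_of_discreteTopology⟩) = m φ := by
  classical
  choose w hw0 hws hw1 hwi using fun p : Finset Γ × ℕ =>
    h p.1 (1 / ((p.2 : ℝ) + 1)) (by positivity)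
  let U : Ultrafilter (Finset Γ × ℕ) := Ultrafilter.of Filter.atTop
  have hU : (U : Filter (Finset Γ × ℕ)) ≤ Filter.atTop := Ultrafilter.of_le _
  have hsum : ∀ p (φ : BoundedContinuousFunction Γ ℝ), Summable fun t => w p t * φ t := by
    intro p φ
    refine Summable.of_norm_bounded ((hws p).mul_right ‖φ‖) fun t => ?_
    rw [norm_mul, Real.norm_of_nonneg (hw0 p t)]
    exact mul_le_mul_of_nonneg_left (φ.norm_coe_le_norm t) (hw0 p t)
  let M : Finset Γ × ℕ → BoundedContinuousFunction Γ ℝ → ℝ := fun p φ => ∑' t, w p t * φ t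
  have hbd : ∀ p φ, M p φ ∈ Set.Icc (-‖φ‖) ‖φ‖ := by
    intro p φ
    rw [Set.mem_Icc, ← abs_le, ← Real.norm_eq_abs]
    have : ‖φ‖ = ∑' t, w p t * ‖φ‖ := by rw [tsum_mul_right, hw1, one_mul]
    rw [this]
    refine tsum_of_norm_bounded ((hws p).mul_right ‖φ‖).hasSum fun t => ?_
    rw [norm_mul, Real.norm_of_nonneg (hw0 p t)]
    exact mul_le_mul_of_nonneg_left (φ.norm_coe_le_norm t) (hw0 p t)
  have hlim : ∀ φ, ∃ c, Filter.Tendsto (fun p => M p φ) U (nhds c) := by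
    intro φ
    obtain ⟨c, -, hc⟩ := (isCompact_Icc (a := -‖φ‖) (b := ‖φ‖)).ultrafilter_le_nhds
      (U.map fun p => M p φ) (by
        rw [Filter.le_principal_iff]
        exact Filter.mem_map.2 (Filter.Eventually.of_forall fun p => hbd p φ))
    exact ⟨c, hc⟩
  choose m hm using hlim
  refine ⟨{ toFun := m, map_add' := ?_, map_smul' := ?_ }, ?_, ?_, ?_⟩
  · intro φ ψ
    refine tendsto_nhds_unique (hm _) (((hm φ).add (hm ψ)).congr fun p => ?_)
    simp only [M]
    rw [← (hsum p φ).tsum_add (hsum p ψ)]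
    exact tsum_congr fun t => by simp [mul_add]
  · intro c φ
    refine tendsto_nhds_unique (hm _) (((hm φ).const_mul c).congr fun p => ?_)
    simp only [M]
    rw [← tsum_mul_left]
    exact tsum_congr fun t => by simp; ring
  · intro φ hφ
    exact ge_of_tendsto' (hm φ) fun p => tsum_nonneg fun t => mul_nonneg (hw0 p t) (hφ t)
  · refine tendsto_nhds_unique (hm _) (tendsto_const_nhds.congr fun p => ?_)
    simp [M, hw1]
  · intro g φ
    simp only [LinearMap.coe_mk, AddHom.coe_mk]
    set ψ := φ.compContinuous ⟨fun t => g⁻¹ * t, continuous_of_discreteTopology⟩ with hψ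
    refine sub_eq_zero.1 (tendsto_nhds_unique ((hm ψ).sub (hm φ)) ?_)
    have hz : Filter.Tendsto (fun p : Finset Γ × ℕ => ‖φ‖ * (1 / ((p.2 : ℝ) + 1))) U (nhds 0) := by
      have : Filter.Tendsto (fun p : Finset Γ × ℕ => ‖φ‖ * (1 / ((p.2 : ℝ) + 1)))
          Filter.atTop (nhds (‖φ‖ * 0)) := by
        refine Filter.Tendsto.const_mul _ (tendsto_one_div_add_atTop_nhds_zero_nat.comp ?_)
        rw [← Filter.prod_atTop_atTop_eq]
        exact Filter.tendsto_snd
      rw [mul_zero] at this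
      exact this.mono_left hU
    refine squeeze_zero_norm' ?_ hz
    have hev : ∀ᶠ p : Finset Γ × ℕ in U, g ∈ p.1 := by
      refine hU ((Filter.eventually_ge_atTop (({g} : Finset Γ), 0)).mono fun p hp => ?_)
      exact hp.1 (by simp)
    filter_upwards [hev] with p hp
    have e1 : M p ψ = ∑' t, w p (g * t) * φ t := by
      change ∑' t, w p t * ψ t = _
      rw [← (Equiv.mulLeft g).tsum_eq fun t => w p t * ψ t]
      exact tsum_congr fun t => by simp [hψ]
    have hwg : Summable fun t => w p (g * t) := (Equiv.mulLeft g).summable_iff.2 (hws p)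
    have hs1 : Summable fun t => w p (g * t) * φ t := by
      refine Summable.of_norm_bounded (hwg.mul_right ‖φ‖) fun t => ?_
      rw [norm_mul, Real.norm_of_nonneg (hw0 p _)]
      exact mul_le_mul_of_nonneg_left (φ.norm_coe_le_norm t) (hw0 p _)
    rw [e1, ← hs1.tsum_sub (hsum p φ)]
    have hd : Summable fun t => |w p (g * t) - w p t| := (hwg.sub (hws p)).abs
    calc _ ≤ ∑' t, |w p (g * t) - w p t| * ‖φ‖ := by
            refine tsum_of_norm_bounded (hd.mul_right ‖φ‖).hasSum fun t => ?_
            rw [← sub_mul, norm_mul, Real.norm_eq_abs]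
            exact mul_le_mul_of_nonneg_left (φ.norm_coe_le_norm t) (abs_nonneg _)
      _ = ‖φ‖ * ∑' t, |w p (g * t) - w p t| := by rw [tsum_mul_right, mul_comm]
      _ ≤ _ := mul_le_mul_of_nonneg_left (hwi p g hp) (norm_nonneg _)

theorem var_bound {Γ : Type} [DecidableEq Γ] (S : Finset Γ) (x : Γ → ℝ) (e s : Γ) (he : e ∈ S)
    (hs : s ∈ S) :
    (x s - x e)^2 ≤ 2 * (∑ u ∈ S, x u ^ 2 - S.card * ((1 / S.card : ℝ) * ∑ u ∈ S, x u)^2) := by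
  have hn : (0:ℝ) < S.card := by exact_mod_cast Finset.card_pos.2 ⟨e, he⟩
  set y := (1 / S.card : ℝ) * ∑ u ∈ S, x u with hy
  have hy' : ∑ u ∈ S, x u = S.card * y := by rw [hy]; field_simp
  have hv : ∑ u ∈ S, (x u - y)^2 = ∑ u ∈ S, x u ^ 2 - S.card * y^2 := by
    have : ∀ u, (x u - y)^2 = x u ^2 - 2 * y * x u + y^2 := fun u => by ring
    simp only [this, Finset.sum_add_distrib, Finset.sum_sub_distrib, ← Finset.mul_sum, hy']
    simp; ring
  rw [← hv]
  by_cases hse : s = e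
  · subst hse
    have : 0 ≤ ∑ u ∈ S, (x u - y)^2 := Finset.sum_nonneg fun _ _ => sq_nonneg _
    simpa using this
  · have : ∑ u ∈ ({s, e} : Finset Γ), (x u - y)^2 ≤ ∑ u ∈ S, (x u - y)^2 :=
      Finset.sum_le_sum_of_subset_of_nonneg (by intro u; simp; rintro (rfl | rfl) <;> assumption)
        fun _ _ _ => sq_nonneg _
    rw [Finset.sum_pair hse] at this
    nlinarith [sq_nonneg ((x s - y) + (x e - y))]

/-- squared l2 norm -/
noncomputable def nsq {Γ : Type} (ξ : Γ → ℝ) : ℝ := ∑' t, ξ t ^ 2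

theorem sq_summable {Γ : Type} (ξ : Γ →₀ ℝ) : Summable fun t => ξ t ^ 2 := by
  refine summable_of_hasFiniteSupport (ξ.hasFiniteSupport.subset ?_)
  intro t; simp

theorem weights_of_vec {Γ : Type} [Group Γ] (S : Finset Γ) (h1 : (1:Γ) ∈ S)
    (hv : ∀ κ : ℝ, 0 < κ → κ < 1 → ∃ ξ : Γ →₀ ℝ, ξ ≠ 0 ∧
      (1 - κ) * nsq ξ ≤ nsq (fun t => (1 / S.card : ℝ) * ∑ u ∈ S, ξ (u⁻¹ * t)))
    (δ : ℝ) (hδ : 0 < δ) : ∃ w : Γ → ℝ, (∀ t, 0 ≤ w t) ∧ Summable w ∧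
      ∑' t, w t = 1 ∧ ∀ s ∈ S, ∑' t, |w (s⁻¹ * t) - w t| ≤ δ := by
  classical
  have hn : (0:ℝ) < S.card := by exact_mod_cast Finset.card_pos.2 ⟨1, h1⟩
  obtain ⟨κ, hκ0, hκ1, hκ⟩ : ∃ κ : ℝ, 0 < κ ∧ κ < 1 ∧ 2 * S.card * κ ≤ 2 * (δ/3)^2 := by
    refine ⟨min (1/2) ((δ/3)^2 / S.card), by positivity, ?_, ?_⟩
    · exact (min_le_left _ _).trans_lt (by norm_num)
    · calc _ ≤ 2 * S.card * ((δ/3)^2 / S.card) := by gcongr; exact min_le_right _ _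
        _ = _ := by field_simp
  obtain ⟨ξ, hξ0, hξ⟩ := hv κ hκ0 hκ1
  have hsq := sq_summable ξ
  have hN : 0 < nsq ξ := by
    obtain ⟨t, ht⟩ := Finsupp.ne_iff.1 hξ0
    have : ξ t ^ 2 ≤ nsq ξ := hsq.le_tsum t fun _ _ => sq_nonneg _
    have : 0 < ξ t ^ 2 := by have : ξ t ≠ 0 := ht
                             positivity
    linarith
  have htr : ∀ u : Γ, HasSum (fun t => ξ (u⁻¹ * t) ^ 2) (nsq ξ) := fun u =>
    (Equiv.mulLeft u⁻¹).hasSum_iff (f := fun t => ξ t ^ 2) |>.2 hsq.hasSum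
  have hη : Summable fun t => ((1 / S.card : ℝ) * ∑ u ∈ S, ξ (u⁻¹ * t))^2 := by
    refine Summable.of_nonneg_of_le (fun _ => sq_nonneg _) (fun t => ?_)
      ((summable_sum fun u (_ : u ∈ S) => (htr u).summable).mul_left (1 / S.card : ℝ))
    have := var_bound S (fun u => ξ (u⁻¹ * t)) 1 1 h1 h1
    simp only [sub_self] at this
    rw [one_div_mul_eq_div (S.card : ℝ) (∑ i ∈ S, ξ (i⁻¹ * t) ^ 2), le_div_iff₀ hn]
    nlinarith
  refine ⟨fun t => ξ t ^ 2 / nsq ξ, fun t => by positivity, hsq.div_const _, ?_, ?_⟩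
  · rw [tsum_div_const]; exact div_self hN.ne'
  intro s hs
  have hdiff : ∑' t, (ξ (s⁻¹ * t) - ξ t)^2 ≤ 2 * S.card * κ * nsq ξ ∧
      Summable fun t => (ξ (s⁻¹ * t) - ξ t)^2 := by
    have hR : HasSum (fun t => 2 * (∑ u ∈ S, ξ (u⁻¹ * t) ^ 2 -
        S.card * ((1 / S.card : ℝ) * ∑ u ∈ S, ξ (u⁻¹ * t))^2))
        (2 * (∑ u ∈ S, nsq ξ - S.card *
          nsq (fun t => (1 / S.card : ℝ) * ∑ u ∈ S, ξ (u⁻¹ * t)))) :=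
      ((hasSum_sum fun u _ => htr u).sub (hη.hasSum.mul_left _)).mul_left _
    have hb : ∀ t, (ξ (s⁻¹ * t) - ξ t)^2 ≤ 2 * (∑ u ∈ S, ξ (u⁻¹ * t) ^ 2 -
        S.card * ((1 / S.card : ℝ) * ∑ u ∈ S, ξ (u⁻¹ * t))^2) := fun t => by
      simpa using var_bound S (fun u => ξ (u⁻¹ * t)) 1 s h1 hs
    have hs' := Summable.of_nonneg_of_le (fun _ => sq_nonneg _) hb hR.summable
    refine ⟨(hs'.tsum_le_tsum hb hR.summable).trans ?_, hs'⟩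
    rw [hR.tsum_eq, Finset.sum_const, nsmul_eq_mul]
    nlinarith
  obtain ⟨hd, hds⟩ := hdiff
  set η := δ / 3 with hηd
  have hη0 : 0 < η := by positivity
  have hB : HasSum (fun t => ((ξ (s⁻¹ * t) - ξ t)^2 / (2 * η) + η * (ξ (s⁻¹ * t)^2 + ξ t ^2)) / nsq ξ)
      (((∑' t, (ξ (s⁻¹ * t) - ξ t)^2) / (2 * η) + η * (nsq ξ + nsq ξ)) / nsq ξ) :=
    ((hds.hasSum.div_const _).add (((htr s).add hsq.hasSum).mul_left η)).div_const _
  have hb : ∀ t, |ξ (s⁻¹ * t) ^ 2 / nsq ξ - ξ t ^ 2 / nsq ξ| ≤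
      ((ξ (s⁻¹ * t) - ξ t)^2 / (2 * η) + η * (ξ (s⁻¹ * t)^2 + ξ t ^2)) / nsq ξ := by
    intro t
    rw [← sub_div, abs_div, abs_of_pos hN]
    gcongr
    generalize ξ (s⁻¹ * t) = x
    generalize ξ t = y
    have : x^2 - y^2 = (x-y) * (x+y) := by ring
    rw [this, abs_mul]
    have h2 : |x-y| * |x+y| ≤ |x-y|^2 / (2*η) + η / 2 * |x+y|^2 := by
      rw [← sub_nonneg]
      have : |x-y|^2 / (2*η) + η / 2 * |x+y|^2 - |x-y| * |x+y| = (|x-y| - η * |x+y|)^2 / (2 * η) := by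
        field_simp; ring
      rw [this]; positivity
    rw [sq_abs, sq_abs] at h2
    nlinarith [mul_nonneg hη0.le (sq_nonneg (x-y))]
  have hs' := Summable.of_nonneg_of_le (fun _ => abs_nonneg _) hb hB.summable
  refine (hs'.tsum_le_tsum hb hB.summable).trans ?_
  rw [hB.tsum_eq, div_le_iff₀ hN]
  have : (∑' t, (ξ (s⁻¹ * t) - ξ t)^2) / (2 * η) ≤ η * nsq ξ := by
    rw [div_le_iff₀ (by positivity)]
    nlinarith
  have : δ = 3 * η := by rw [hηd]; ring
  rw [this]; linarith

/-- the functional on the group algebra attached to a function -/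
noncomputable def phi {Γ : Type} (F : Γ → ℝ) : MonoidAlgebra ℝ Γ →ₗ[ℝ] ℝ :=
  (Finsupp.linearCombination ℝ F).comp
    (MonoidAlgebra.coeffLinearEquiv (R := ℝ) (S := ℝ) (M := Γ)).toLinearMap

theorem phi_apply {Γ : Type} (F : Γ → ℝ) (a : MonoidAlgebra ℝ Γ) :
    phi F a = a.coeff.sum fun g x => x * F g := rfl

theorem phi_single {Γ : Type} (F : Γ → ℝ) (g : Γ) (x : ℝ) :
    phi F (MonoidAlgebra.single g x) = x * F g := by
  simp [phi_apply]

theorem phi_mul {Γ : Type} [Group Γ] (F : Γ → ℝ) (a b : MonoidAlgebra ℝ Γ) :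
    phi F (a * b) = ∑ x ∈ a.coeff.support, ∑ y ∈ b.coeff.support,
      a.coeff x * b.coeff y * F (x * y) := by
  rw [MonoidAlgebra.mul_def]
  simp only [Finsupp.sum, map_sum, phi_single]

theorem phi_mul_self_nonneg {Γ : Type} [Group Γ] (f : Γ → ℂ) (hf : IsPosDefFn f)
    (a : MonoidAlgebra ℝ Γ) (ha : ∀ g, a.coeff g⁻¹ = a.coeff g) :
    0 ≤ phi (fun g => (f g).re) (a * a) := by
  classical
  set s := a.coeff.support with hs
  have key := hf s.card (fun j => (s.equivFin.symm j : Γ))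
    (fun j => ((a.coeff (s.equivFin.symm j : Γ) : ℝ) : ℂ))
  have key2 := (Complex.le_def.1 key).1
  simp only [Complex.conj_ofReal, Complex.re_sum, ← Complex.ofReal_mul, Complex.re_ofReal_mul,
    Complex.zero_re] at key2
  rw [phi_mul, Finset.sum_comm]
  refine key2.trans_eq ?_
  rw [s.equivFin.symm.sum_comp (fun y : s => ∑ k, a.coeff y * a.coeff (s.equivFin.symm k : Γ) *
      (f ((s.equivFin.symm k : Γ)⁻¹ * y)).re)]
  rw [Finset.sum_coe_sort s (fun y : Γ => ∑ k, a.coeff y * a.coeff (s.equivFin.symm k : Γ) *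
      (f ((s.equivFin.symm k : Γ)⁻¹ * y)).re)]
  refine Finset.sum_congr rfl fun y _ => ?_
  rw [s.equivFin.symm.sum_comp (fun x : s => a.coeff y * a.coeff (x : Γ) *
      (f ((x : Γ)⁻¹ * y)).re)]
  rw [Finset.sum_coe_sort s (fun x : Γ => a.coeff y * a.coeff (x : Γ) *
      (f ((x : Γ)⁻¹ * y)).re)]
  refine Finset.sum_equiv (Equiv.inv Γ) (fun x => ?_) (fun x _ => ?_)
  · simp [hs, ha]
  · simp only [Equiv.inv_apply, ha]; ring

theorem phi_sq_le {Γ : Type} [Group Γ] (f : Γ → ℂ) (hf : IsPosDefFn f) (h1 : f 1 = 1)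
    (a : MonoidAlgebra ℝ Γ) (ha : ∀ g, a.coeff g⁻¹ = a.coeff g) :
    phi (fun g => (f g).re) a ^ 2 ≤ phi (fun g => (f g).re) (a * a) := by
  classical
  set F := fun g => (f g).re
  set t := phi F a with ht
  have hone : phi F 1 = 1 := by rw [MonoidAlgebra.one_def, phi_single]; simp [F, h1]
  have := phi_mul_self_nonneg f hf (a - t • 1) (fun g => by
    simp [ha, MonoidAlgebra.one_def, Finsupp.single_apply, eq_comm (a := (1 : Γ))])
  have e : (a - t • 1) * (a - t • 1) = a * a - (2 * t) • a + (t^2) • (1 : MonoidAlgebra ℝ Γ) := by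
    simp only [sub_mul, mul_sub, smul_mul_assoc, mul_smul_comm, one_mul, mul_one]
    module
  rw [e] at this
  change 0 ≤ phi F _ at this
  simp only [map_add, map_sub, map_smul, smul_eq_mul, hone] at this
  rw [← ht] at this
  nlinarith

/-- uniform measure on `S` -/
noncomputable def unif {Γ : Type} (S : Finset Γ) : MonoidAlgebra ℝ Γ :=
  ∑ s ∈ S, MonoidAlgebra.single s (1 / S.card : ℝ)

theorem unif_mul_apply {Γ : Type} [Group Γ] (S : Finset Γ) (ξ : MonoidAlgebra ℝ Γ) (t : Γ) :
    (unif S * ξ).coeff t = (1 / S.card : ℝ) * ∑ u ∈ S, ξ.coeff (u⁻¹ * t) := by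
  rw [unif, Finset.sum_mul, MonoidAlgebra.coeff_sum, Finsupp.finsetSum_apply, Finset.mul_sum]
  exact Finset.sum_congr rfl fun u _ => MonoidAlgebra.coeff_single_mul_apply _ _ _ _

theorem mul_unif_apply {Γ : Type} [Group Γ] (S : Finset Γ) (ξ : MonoidAlgebra ℝ Γ) (t : Γ) :
    (ξ * unif S).coeff t = (1 / S.card : ℝ) * ∑ u ∈ S, ξ.coeff (t * u⁻¹) := by
  rw [unif, Finset.mul_sum, MonoidAlgebra.coeff_sum, Finsupp.finsetSum_apply, Finset.mul_sum]
  refine Finset.sum_congr rfl fun u _ => ?_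
  rw [MonoidAlgebra.coeff_mul_single_apply, mul_comm]

theorem unif_pow_symm {Γ : Type} [Group Γ] (S : Finset Γ) (hS : ∀ s, s⁻¹ ∈ S ↔ s ∈ S) (m : ℕ) :
    ∀ g, (unif S ^ m).coeff g⁻¹ = (unif S ^ m).coeff g := by
  classical
  induction m with
  | zero =>
    intro g
    simp [MonoidAlgebra.one_def, Finsupp.single_apply, eq_comm (a := (1 : Γ))]
  | succ m ih =>
    intro g
    rw [pow_succ', unif_mul_apply, ← pow_succ', pow_succ, mul_unif_apply]
    congr 1
    refine Finset.sum_equiv (Equiv.inv Γ) (fun x => by simp [hS]) (fun x _ => ?_)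
    rw [← ih]; simp

theorem unif_pow_nonneg {Γ : Type} [Group Γ] (S : Finset Γ) (m : ℕ) :
    ∀ g, 0 ≤ (unif S ^ m).coeff g := by
  classical
  induction m with
  | zero =>
    intro g
    simp only [pow_zero, MonoidAlgebra.one_def, MonoidAlgebra.coeff_single, Finsupp.single_apply]
    split_ifs <;> norm_num
  | succ m ih =>
    intro g
    rw [pow_succ', unif_mul_apply]
    exact mul_nonneg (by positivity) (Finset.sum_nonneg fun _ _ => ih _)

theorem unif_pow_sum {Γ : Type} [Group Γ] (S : Finset Γ) (hS : S.Nonempty) (m : ℕ) :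
    ((unif S ^ m).coeff.sum fun _ x => x) = 1 := by
  have h := MonoidAlgebra.lift_apply (R := ℝ) (A := ℝ) (1 : Γ →* ℝ) (unif S ^ m)
  simp only [MonoidHom.one_apply, smul_eq_mul, mul_one] at h
  have hn : (S.card : ℝ) ≠ 0 := by exact_mod_cast hS.card_pos.ne'
  rw [← h, map_pow, unif, map_sum]
  simp [MonoidAlgebra.lift_single, hn]

theorem exists_vec {Γ : Type} [Group Γ]
    (ε : ℝ) (hε : 0 < ε)
    (hF : ∀ T : Finset Γ, ∃ f : Γ → ℂ, (Function.support f).Finite ∧ IsPosDefFn f ∧ f 1 = 1 ∧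
      ∀ g ∈ T, ε ≤ (f g).re)
    (S : Finset Γ) (h1 : (1 : Γ) ∈ S) (hS : ∀ s, s⁻¹ ∈ S ↔ s ∈ S) (κ : ℝ) (hκ : 0 < κ)
    (hκ1 : κ < 1) : ∃ ξ : Γ →₀ ℝ, ξ ≠ 0 ∧
      (1 - κ) * nsq ξ ≤ nsq (fun t => (1 / S.card : ℝ) * ∑ u ∈ S, ξ (u⁻¹ * t)) := by
  classical
  by_contra! hcon
  set r := 1 - κ with hr
  have hr0 : 0 < r := by linarith
  have hr1 : r < 1 := by linarith
  have hN : ∀ m, nsq (unif S ^ m).coeff ≤ r ^ m := by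
    intro m
    induction m with
    | zero =>
      have : nsq ((unif S ^ 0).coeff) = 1 := by
        rw [nsq, tsum_eq_single 1]
        · simp [MonoidAlgebra.one_def]
        · intro t ht
          simp [MonoidAlgebra.one_def, ht.symm]
      rw [this]; simp
    | succ m ih =>
      have hne : (unif S ^ m).coeff ≠ 0 := by
        intro h0
        have := unif_pow_sum S ⟨1, h1⟩ m
        rw [h0] at this
        simp at this
      have h2 := hcon _ hne
      have h3 : nsq (unif S ^ (m+1)).coeff =
          nsq (fun t => (1 / S.card : ℝ) * ∑ u ∈ S, (unif S ^ m).coeff (u⁻¹ * t)) := by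
        congr 1
        funext t
        rw [pow_succ', unif_mul_apply]
      rw [h3, pow_succ']
      exact h2.le.trans (by gcongr)
  obtain ⟨n, hn⟩ := exists_pow_lt_of_lt_one (show 0 < ε ^ 2 by positivity) hr1
  obtain ⟨f, hfs, hfp, hf1, hfe⟩ := hF (unif S ^ n).coeff.support
  set F := fun g => (f g).re with hFd
  have hlow : ∀ k : ℕ, ε ^ (2 ^ k) ≤ phi F (unif S ^ (n * 2 ^ k)) := by
    intro k
    induction k with
    | zero =>
      simp only [pow_zero, pow_one, mul_one]
      calc ε = ε * 1 := (mul_one _).symm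
        _ = ∑ g ∈ (unif S ^ n).coeff.support, (unif S ^ n).coeff g * ε := by
          rw [← unif_pow_sum S ⟨1, h1⟩ n, Finsupp.sum, mul_comm, Finset.sum_mul]
        _ ≤ _ := by
          rw [phi_apply]
          exact Finset.sum_le_sum fun g hg =>
            mul_le_mul_of_nonneg_left (hfe g hg) (unif_pow_nonneg S n g)
    | succ k ih =>
      calc ε ^ (2 ^ (k+1)) = (ε ^ (2 ^ k)) ^ 2 := by rw [← pow_mul, pow_succ]
        _ ≤ (phi F (unif S ^ (n * 2 ^ k))) ^ 2 := by gcongr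
        _ ≤ phi F (unif S ^ (n * 2 ^ k) * unif S ^ (n * 2 ^ k)) :=
          phi_sq_le f hfp hf1 _ (unif_pow_symm S hS _)
        _ = _ := by rw [← pow_add]; congr 2; ring
  set C := ∑ g ∈ hfs.toFinset, |F g| with hC
  have hup : ∀ m, phi F (unif S ^ m) ^ 2 ≤ C ^ 2 * r ^ m := by
    intro m
    have hpt : ∀ g, |(unif S ^ m).coeff g| ≤ Real.sqrt (r ^ m) := by
      intro g
      apply Real.abs_le_sqrt
      exact ((sq_summable _).le_tsum g fun _ _ => sq_nonneg _).trans (hN m)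
    have h2 : |phi F (unif S ^ m)| ≤ C * Real.sqrt (r ^ m) := by
      have e : phi F (unif S ^ m) = ∑ g ∈ hfs.toFinset, (unif S ^ m).coeff g * F g := by
        rw [phi_apply, Finsupp.sum]
        trans ∑ g ∈ (unif S ^ m).coeff.support ∩ hfs.toFinset, (unif S ^ m).coeff g * F g
        · refine (Finset.sum_subset Finset.inter_subset_left ?_).symm
          intro x hx hx'
          have : f x = 0 := by
            by_contra h0
            exact hx' (Finset.mem_inter.2 ⟨hx, by simpa using h0⟩)
          simp [hFd, this]
        · refine Finset.sum_subset Finset.inter_subset_right ?_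
          intro x hx hx'
          have : (unif S ^ m).coeff x = 0 := by
            by_contra h0
            exact hx' (Finset.mem_inter.2 ⟨Finsupp.mem_support_iff.2 h0, hx⟩)
          rw [this, zero_mul]
      rw [e, hC, Finset.sum_mul]
      refine (Finset.abs_sum_le_sum_abs _ _).trans (Finset.sum_le_sum fun g _ => ?_)
      rw [abs_mul, mul_comm]
      exact mul_le_mul_of_nonneg_left (hpt g) (abs_nonneg _)
    calc phi F (unif S ^ m) ^ 2 = |phi F (unif S ^ m)| ^ 2 := (sq_abs _).symm
      _ ≤ (C * Real.sqrt (r ^ m)) ^ 2 := by gcongr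
      _ = _ := by rw [mul_pow, Real.sq_sqrt (by positivity)]
  have hq : 1 < ε ^ 2 / r ^ n := by rwa [one_lt_div (by positivity)]
  obtain ⟨k, hk⟩ := pow_unbounded_of_one_lt (C ^ 2) hq
  have hk2 : C ^ 2 < (ε ^ 2 / r ^ n) ^ (2 ^ k) :=
    hk.trans_le (pow_le_pow_right₀ hq.le Nat.lt_two_pow_self.le)
  rw [div_pow, lt_div_iff₀ (by positivity)] at hk2
  have h3 := hup (n * 2 ^ k)
  have h4 : (ε ^ (2 ^ k)) ^ 2 ≤ phi F (unif S ^ (n * 2 ^ k)) ^ 2 := by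
    gcongr; exact hlow k
  rw [pow_mul r] at h3
  have h5 : (ε ^ 2) ^ (2 ^ k) = (ε ^ (2 ^ k)) ^ 2 := by rw [← pow_mul, ← pow_mul, mul_comm]
  linarith

/-- If a discrete group `Γ` admits `ε > 0` and a net of normalized finitely supported
positive-definite functions which, at every point, are eventually real-valued and `≥ ε`,
then `Γ` is amenable (there is a left-invariant mean on `ℓ∞(Γ, ℝ)`). -/
theorem amenable_of_eventually_separated_posdef
    {Γ : Type} [Group Γ] [TopologicalSpace Γ] [DiscreteTopology Γ]
    (ε : ℝ) (hε : 0 < ε)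
    (I : Type) (pI : Preorder I) (hne : Nonempty I) (hdir : IsDirected I (· ≤ ·))
    (f : I → Γ → ℂ)
    (hsupp : ∀ i, (Function.support (f i)).Finite)
    (hpd : ∀ i, IsPosDefFn (f i))
    (hnorm : ∀ i, f i 1 = 1)
    (hsep : ∀ g : Γ, ∃ i₀ : I, ∀ i, i₀ ≤ i → (ε : ℂ) ≤ f i g) :
    ∃ m : BoundedContinuousFunction Γ ℝ →ₗ[ℝ] ℝ,
      (∀ φ : BoundedContinuousFunction Γ ℝ, (∀ t, 0 ≤ φ t) → 0 ≤ m φ) ∧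
      m 1 = 1 ∧
      ∀ (g : Γ) (φ : BoundedContinuousFunction Γ ℝ),
        m (φ.compContinuous ⟨fun t => g⁻¹ * t, continuous_of_discreteTopology⟩) = m φ := by
  classical
  have hF : ∀ T : Finset Γ, ∃ f : Γ → ℂ, (Function.support f).Finite ∧ IsPosDefFn f ∧ f 1 = 1 ∧
      ∀ g ∈ T, ε ≤ (f g).re := by
    intro T
    choose i₀ hi₀ using hsep
    obtain ⟨i, hi⟩ := Finset.exists_le (T.image i₀)
    refine ⟨f i, hsupp i, hpd i, hnorm i, fun g hg => ?_⟩
    have := (Complex.le_def.1 (hi₀ g i (hi _ (Finset.mem_image_of_mem _ hg)))).1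
    simpa using this
  refine mean_of_weights fun S δ hδ => ?_
  let S' : Finset Γ := insert 1 (S ∪ S.image (·⁻¹))
  have h1 : (1 : Γ) ∈ S' := by simp [S']
  have hS' : ∀ s, s⁻¹ ∈ S' ↔ s ∈ S' := by
    intro s
    have : ∀ s, s ∈ S' ↔ s = 1 ∨ s ∈ S ∨ s⁻¹ ∈ S := by
      intro s
      simp only [S', Finset.mem_insert, Finset.mem_union, Finset.mem_image]
      constructor
      · rintro (h | h | ⟨a, ha, rfl⟩)
        · exact Or.inl h
        · exact Or.inr (Or.inl h)
        · simp [ha]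
      · rintro (h | h | h)
        · exact Or.inl h
        · exact Or.inr (Or.inl h)
        · exact Or.inr (Or.inr ⟨_, h, inv_inv _⟩)
    rw [this, this, inv_inv, inv_eq_one]
    tauto
  obtain ⟨w, hw0, hws, hw1, hw⟩ := weights_of_vec S' h1
    (fun κ h0 hlt => exists_vec ε hε hF S' h1 hS' κ h0 hlt) δ hδ
  refine ⟨w, hw0, hws, hw1, fun s hs => ?_⟩
  have := hw s⁻¹ ((hS' s).2 (by simp [S', hs]))
  simpa using this
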